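/- Equip Σ^ℕ with the metric d(i,j) = s_{i∧j} for i ≠ j (and d(i,i) = 0), where i∧j ∈ Σ* is the longest common prefix of i and j. Let μ be an ergodic shift-invariant Borel probability measure on Σ^ℕ. Then the upper Hausdorff dimension of μ, defined by dim̄_H μ = inf{ dim_H Ξ : Ξ ⊆ Σ^ℕ, μ(Ξ) = 1 }, equals −h(μ)/∫Λ dμ. -/

import Mathlib

open MeasureTheory Filter Topology Metric Set
open scoped ENNReal NNReal Classical

namespace Multifractal

/-- Infinite strings over `{1,…,N}`. -/
abbrev Seq (N : ℕ) := ℕ → Fin N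

/-- Finite strings over `{1,…,N}` (the empty string is excluded where appropriate). -/
abbrev Word (N : ℕ) := List (Fin N)

variable {N : ℕ}

/-- The shift map on `Σ^ℕ`. -/
def shift : Seq N → Seq N := fun x n => x (n + 1)

/-- The cylinder `[w]` generated by a finite string `w`. -/
def cylinder (w : Word N) : Set (Seq N) :=
  {x : Seq N | ∀ (k : ℕ) (h : k < w.length), x k = w.get ⟨k, h⟩}

/-- Birkhoff sum `∑_{k<n} φ(S^k x)`. -/
noncomputable def birkhoff (φ : Seq N → ℝ) (n : ℕ) (x : Seq N) : ℝ :=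
  ∑ k ∈ Finset.range n, φ (shift^[k] x)

/-- `s_w = sup_{x ∈ [w]} exp (∑_{k<|w|} Λ(S^k x))`. -/
noncomputable def sWord (Λ : Seq N → ℝ) (w : Word N) : ℝ :=
  sSup ((fun x => Real.exp (birkhoff Λ w.length x)) '' cylinder w)

/-- Bounded distortion (condition (C3)): `exp(S_nΛ(i))/exp(S_nΛ(j)) ∈ [1/c, c]`
whenever `i|n = j|n`.  (By symmetry in `i,j` the one-sided bound suffices.) -/
def BddDistortion (Λ : Seq N → ℝ) (c : ℝ) : Prop :=
  ∀ (n : ℕ) (i j : Seq N), (∀ k < n, i k = j k) →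
    Real.exp (birkhoff Λ n i) ≤ c * Real.exp (birkhoff Λ n j)

/-- The empirical measure `L_n x = (1/n) ∑_{k<n} δ_{S^k x}` (junk value `δ_x` for `n = 0`). -/
noncomputable def emp (n : ℕ) (x : Seq N) : ProbabilityMeasure (Seq N) :=
  if h : n = 0 then ⟨Measure.dirac x, inferInstance⟩
  else
    ⟨(n : ℝ≥0∞)⁻¹ • ∑ k ∈ Finset.range n, Measure.dirac (shift^[k] x), by
      constructor
      simp only [Measure.smul_apply, Measure.coe_finset_sum, Finset.sum_apply, measure_univ,
        Finset.sum_const, Finset.card_range, nsmul_eq_mul, mul_one, smul_eq_mul]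
      exact ENNReal.inv_mul_cancel (Nat.cast_ne_zero.mpr h) (ENNReal.natCast_ne_top n)⟩

/-- Shift invariance of a probability measure. -/
def Invariant (μ : ProbabilityMeasure (Seq N)) : Prop :=
  μ.toMeasure.map shift = μ.toMeasure

/-- `n`-th partition entropy `-∑_{|w|=n} μ[w] log μ[w]`. -/
noncomputable def entropyAux (μ : ProbabilityMeasure (Seq N)) (n : ℕ) : ℝ :=
  -∑ w : Fin n → Fin N,
      (μ (cylinder (List.ofFn w)) : ℝ) * Real.log (μ (cylinder (List.ofFn w)) : ℝ)

/-- The Kolmogorov–Sinai entropy of a (shift-invariant) measure on the full shift,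
via the generating partition into cylinders. -/
noncomputable def entropy (μ : ProbabilityMeasure (Seq N)) : ℝ :=
  Filter.atTop.liminf fun n => entropyAux μ n / n

/-- Abscissa of convergence of the "zeta-function" `s ↦ ∑ a_w^s`, the sum ranging over the
nonempty finite strings satisfying `P`; values in `EReal` (so `⊤` if never summable and `⊥`
if always summable, e.g. for an empty index set). -/
noncomputable def sigmaAbs (a : Word N → ℝ) (P : Word N → Prop) : EReal :=
  sInf ((fun t : ℝ => (t : EReal)) ''
    {t : ℝ | Summable fun w : {w : Word N // w ≠ [] ∧ P w} => a w.1 ^ t})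

variable {X : Type*}

/-- `U(L_{|w|}[w]) ⊆ B`. -/
def inTarget (U : ProbabilityMeasure (Seq N) → X) (B : Set X) (w : Word N) : Prop :=
  ∀ x ∈ cylinder w, U (emp w.length x) ∈ B

/-- The closed `r`-neighbourhood `B(C,r)` of a set. -/
def cball [MetricSpace X] (C : Set X) (r : ℝ) : Set X := {x | infDist x C ≤ r}

/-- The counting function `N_δ^{U,Λ}(C,r)`: number of strings `w` with `s_w ≈ δ` and
`U(L_{|w|}[w]) ⊆ B(C,r)`. -/
noncomputable def Ncount [MetricSpace X] (Λ : Seq N → ℝ) (U : ProbabilityMeasure (Seq N) → X)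
    (C : Set X) (r δ : ℝ) : ℕ :=
  Set.ncard {w : Word N | w ≠ [] ∧ sWord Λ w ≤ δ ∧ δ < sWord Λ w.dropLast ∧
    inTarget U (cball C r) w}

/-- `log m / (-log δ)`, read as `-∞` when `m = 0`. -/
noncomputable def ratioE (m : ℕ) (δ : ℝ) : EReal :=
  if m = 0 then ⊥ else (((Real.log m) / (-Real.log δ) : ℝ) : EReal)

/-- The `r`-approximate lower coarse multifractal spectrum `f̲^{U,Λ}(C,r)`. -/
noncomputable def coarseLowerR [MetricSpace X] (Λ : Seq N → ℝ)
    (U : ProbabilityMeasure (Seq N) → X) (C : Set X) (r : ℝ) : EReal :=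
  Filter.liminf (fun δ : ℝ => ratioE (Ncount Λ U C r δ) δ) (𝓝[>] (0 : ℝ))

/-- The lower coarse multifractal spectrum `f̲^{U,Λ}(C) = lim_{r↘0} f̲^{U,Λ}(C,r)`;
since `f̲^{U,Λ}(C,r)` is nondecreasing in `r`, the limit is the infimum over `r > 0`. -/
noncomputable def coarseLower [MetricSpace X] (Λ : Seq N → ℝ)
    (U : ProbabilityMeasure (Seq N) → X) (C : Set X) : EReal :=
  ⨅ (r : ℝ) (_ : 0 < r), coarseLowerR Λ U C r

/-- The variational quantity `sup { -h(μ)/∫Λ dμ : μ shift-invariant, Uμ ∈ C }`. -/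
noncomputable def varSup (Λ : Seq N → ℝ) (U : ProbabilityMeasure (Seq N) → X)
    (C : Set X) : EReal :=
  sSup {x : EReal | ∃ μ : ProbabilityMeasure (Seq N), Invariant μ ∧ U μ ∈ C ∧
    x = ((-(entropy μ) / ∫ y, Λ y ∂μ.toMeasure : ℝ) : EReal)}

end Multifractal

namespace Multifractal

/-- The metric `d(i,j) = s_{i∧j}` on `Σ^ℕ` (where `i∧j` is the longest common prefix),
with `d(i,i) = 0`. -/
noncomputable def treeDist {N : ℕ} (Λ : Seq N → ℝ) (i j : Seq N) : ℝ :=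
  if i = j then 0
  else sWord Λ (List.ofFn fun k : Fin (sSup {n : ℕ | ∀ m < n, i m = j m}) => i k)

/-- Diameter of a set with respect to `treeDist`. -/
noncomputable def treeDiam {N : ℕ} (Λ : Seq N → ℝ) (A : Set (Seq N)) : ℝ≥0∞ :=
  ⨆ (i ∈ A) (j ∈ A), ENNReal.ofReal (treeDist Λ i j)

/-- The `t`-dimensional Hausdorff (outer) measure with respect to `treeDist`. -/
noncomputable def treeHMeasure {N : ℕ} (Λ : Seq N → ℝ) (t : ℝ) (E : Set (Seq N)) : ℝ≥0∞ :=
  ⨆ (δ : ℝ≥0∞) (_ : 0 < δ),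
    ⨅ (f : ℕ → Set (Seq N)) (_ : E ⊆ ⋃ n, f n) (_ : ∀ n, treeDiam Λ (f n) ≤ δ),
      ∑' n, treeDiam Λ (f n) ^ t

/-- The Hausdorff dimension with respect to `treeDist`. -/
noncomputable def treeDimH {N : ℕ} (Λ : Seq N → ℝ) (E : Set (Seq N)) : ℝ≥0∞ :=
  ⨆ (t : ℝ≥0) (_ : treeHMeasure Λ t E = ⊤), (t : ℝ≥0∞)

end Multifractal

namespace Multifractal

/-- The cylinder of all sequences agreeing with `x` in the first `n` letters. -/
def cyl {N : ℕ} (n : ℕ) (x : Seq N) : Set (Seq N) := {y | ∀ k < n, y k = x k}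

/-- A function on sequences that only depends on the first `n` letters. -/
def FiniteDep {N : ℕ} {α : Type*} (n : ℕ) (F : Seq N → α) : Prop :=
  ∀ x y : Seq N, (∀ k < n, x k = y k) → F x = F y

/-- The sequence starting with the word `w` and continuing with `z`. -/
def prepend {N n : ℕ} (w : Fin n → Fin N) (z : Seq N) : Seq N :=
  fun k => if h : k < n then w ⟨k, h⟩ else z (k - n)

/-- The sequence `a z₀ z₁ …`. -/
def consSeq {N : ℕ} (a : Fin N) (z : Seq N) : Seq N := fun k => Nat.casesOn k a z

/-- The transfer operator with constant weight `1`. -/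
def transfer {N : ℕ} (F : Seq N → ℝ) : Seq N → ℝ := fun z => ∑ a : Fin N, F (consSeq a z)

/-- The measure of the cylinder of length `n` around `x`. -/
noncomputable def cylMass {N : ℕ} (μ : Measure (Seq N)) (n : ℕ) (x : Seq N) : ℝ := μ.real (cyl n x)

section Symbolic

variable {N : ℕ}

lemma mem_cyl {n : ℕ} {x y : Seq N} : y ∈ cyl n x ↔ ∀ k < n, y k = x k := Iff.rfl

lemma self_mem_cyl (n : ℕ) (x : Seq N) : x ∈ cyl n x := fun _ _ => rfl

lemma cyl_eq_of_agree {n : ℕ} {x y : Seq N} (h : ∀ k < n, x k = y k) : cyl n x = cyl n y := by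
  ext u
  exact forall₂_congr fun k hk => by rw [h k hk]

lemma prepend_agree {n : ℕ} (x z : Seq N) :
    ∀ k < n, prepend (fun i : Fin n => x i) z k = x k := by
  intro k hk; simp [prepend, hk]

lemma prepend_apply {n : ℕ} (w : Fin n → Fin N) (z : Seq N) (i : Fin n) :
    prepend w z i = w i := by
  simp [prepend]

lemma cylinder_ofFn {n : ℕ} (w : Fin n → Fin N) (z : Seq N) :
    cylinder (List.ofFn w) = cyl n (prepend w z) := by
  ext x
  simp only [cylinder, cyl, mem_ofPred_eq, List.length_ofFn, List.get_ofFn, prepend]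
  refine forall₂_congr fun k hk => ?_
  simp [hk]

lemma prepend_cons {n : ℕ} (a : Fin N) (w : Fin n → Fin N) (z : Seq N) :
    prepend (Fin.cons a w : Fin (n + 1) → Fin N) z = consSeq a (prepend w z) := by
  funext k
  cases k with
  | zero => simp [prepend, consSeq]
  | succ k =>
    simp only [prepend, consSeq, Nat.add_lt_add_iff_right, Nat.add_sub_add_right]
    split_ifs with h
    · exact Fin.cons_succ (α := fun _ => Fin N) a w ⟨k, h⟩
    · rfl

lemma shift_iterate_apply (n k : ℕ) (x : Seq N) : (shift^[n] x) k = x (k + n) := by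
  induction n generalizing x with
  | zero => rfl
  | succ n ih => rw [Function.iterate_succ_apply, ih]; simp [shift, add_assoc]

lemma transfer_iterate (n : ℕ) (F : Seq N → ℝ) (z : Seq N) :
    transfer^[n] F z = ∑ w : Fin n → Fin N, F (prepend w z) := by
  induction n generalizing F with
  | zero =>
    rw [Fintype.sum_unique]
    simp only [Function.iterate_zero, id]
    congr 1
  | succ n ih =>
    rw [Function.iterate_succ_apply, ih,
      ← Equiv.sum_comp (Fin.consEquiv (fun _ => Fin N)), Fintype.sum_prod_type, Finset.sum_comm]
    refine Finset.sum_congr rfl fun w _ => ?_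
    refine Finset.sum_congr rfl fun a _ => ?_
    simp only [Fin.consEquiv, Equiv.coe_fn_mk, prepend_cons]

lemma transfer_iterate_mono {n : ℕ} {F G : Seq N → ℝ} (h : ∀ x, F x ≤ G x) (z : Seq N) :
    transfer^[n] F z ≤ transfer^[n] G z := by
  simp only [transfer_iterate]
  exact Finset.sum_le_sum fun w _ => h _

lemma transfer_iterate_add {n : ℕ} (F G : Seq N → ℝ) (z : Seq N) :
    transfer^[n] (fun x => F x + G x) z = transfer^[n] F z + transfer^[n] G z := by
  simp only [transfer_iterate, Finset.sum_add_distrib]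

lemma transfer_iterate_const_mul {n : ℕ} (c : ℝ) (F : Seq N → ℝ) (z : Seq N) :
    transfer^[n] (fun x => c * F x) z = c * transfer^[n] F z := by
  simp only [transfer_iterate, Finset.mul_sum]

lemma transfer_iterate_finset_sum {n : ℕ} {ι : Type*} (s : Finset ι) (F : ι → Seq N → ℝ)
    (z : Seq N) :
    transfer^[n] (fun x => ∑ i ∈ s, F i x) z = ∑ i ∈ s, transfer^[n] (F i) z := by
  simp only [transfer_iterate]
  exact Finset.sum_comm

lemma transfer_iterate_mul_comp_shift (n : ℕ) (F G : Seq N → ℝ) :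
    transfer^[n] (fun x => F x * G (shift^[n] x)) = fun z => transfer^[n] F z * G z := by
  funext z
  simp only [transfer_iterate, Finset.sum_mul]
  refine Finset.sum_congr rfl fun w _ => ?_
  congr 2
  funext k
  rw [shift_iterate_apply]
  simp [prepend]

/-! ### Finite dependence, measurability and integrals -/

lemma FiniteDep.comp_shift {α : Type*} {n : ℕ} {F : Seq N → α} (hF : FiniteDep n F) (m : ℕ) :
    FiniteDep (n + m) fun x => F (shift^[m] x) := by
  intro x y h
  refine hF _ _ fun k hk => ?_
  rw [shift_iterate_apply, shift_iterate_apply]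
  exact h _ (by omega)

lemma FiniteDep.mono {α : Type*} {n m : ℕ} {F : Seq N → α} (hF : FiniteDep n F) (h : n ≤ m) :
    FiniteDep m F := fun x y hxy => hF x y fun k hk => hxy k (hk.trans_le h)

lemma FiniteDep.eq_comp {α : Type*} {n : ℕ} {F : Seq N → α} (hF : FiniteDep n F) (z : Seq N) :
    F = (fun w : Fin n → Fin N => F (prepend w z)) ∘ fun (x : Seq N) (i : Fin n) => x i := by
  funext x
  exact hF _ _ fun k hk => (prepend_agree x z k hk).symm

lemma measurable_restrict (n : ℕ) : Measurable fun (x : Seq N) (i : Fin n) => x i :=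
  measurable_pi_lambda _ fun _ => measurable_pi_apply _

lemma FiniteDep.measurable {α : Type*} [MeasurableSpace α] {n : ℕ} {F : Seq N → α}
    (hF : FiniteDep n F) : Measurable F := by
  rcases isEmpty_or_nonempty (Seq N) with h | ⟨⟨z⟩⟩
  · exact measurable_of_empty F
  · rw [hF.eq_comp z]
    exact (measurable_of_finite _).comp (measurable_restrict n)

lemma FiniteDep.measurableSet {n : ℕ} {p : Seq N → Prop} (hp : FiniteDep n p) :
    MeasurableSet {x | p x} := measurableSet_setOfPred.2 hp.measurable

lemma finiteDep_mem_cyl (n : ℕ) (x : Seq N) : FiniteDep n (· ∈ cyl n x) := by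
  intro y u h
  simp only [mem_cyl]
  exact propext (forall₂_congr fun k hk => by rw [h k hk])

lemma measurableSet_cyl (n : ℕ) (x : Seq N) : MeasurableSet (cyl n x) :=
  (finiteDep_mem_cyl n x).measurableSet

lemma finiteDep_cylMass (μ : Measure (Seq N)) (n : ℕ) : FiniteDep n (cylMass μ n) := by
  intro x y h
  rw [cylMass, cylMass, cyl_eq_of_agree h]

variable (μ : Measure (Seq N))

lemma cylMass_nonneg (n : ℕ) (x : Seq N) : 0 ≤ cylMass μ n x := measureReal_nonneg

lemma map_restrict_singleton {n : ℕ} (w : Fin n → Fin N) (z : Seq N) :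
    (μ.map fun (x : Seq N) (i : Fin n) => x i).real {w} = cylMass μ n (prepend w z) := by
  rw [cylMass, map_measureReal_apply (measurable_restrict n) (measurableSet_singleton w)]
  congr 1
  ext x
  simp only [mem_preimage, mem_singleton_iff, mem_cyl, funext_iff]
  constructor
  · intro h k hk
    rw [show x k = w ⟨k, hk⟩ from h ⟨k, hk⟩, ← prepend_apply w z ⟨k, hk⟩]
  · intro h i
    rw [h i i.2, prepend_apply]

variable [IsProbabilityMeasure μ]

lemma cylMass_le_one (n : ℕ) (x : Seq N) : cylMass μ n x ≤ 1 := measureReal_le_one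

lemma FiniteDep.integrable {n : ℕ} {F : Seq N → ℝ} (hF : FiniteDep n F) : Integrable F μ := by
  obtain ⟨z⟩ : Nonempty (Seq N) := nonempty_of_isProbabilityMeasure μ
  have : IsProbabilityMeasure (μ.map fun (x : Seq N) (i : Fin n) => x i) :=
    Measure.isProbabilityMeasure_map (measurable_restrict n).aemeasurable
  rw [hF.eq_comp z]
  exact Integrable.comp_measurable (Integrable.of_finite) (measurable_restrict n)

lemma FiniteDep.integral_eq {n : ℕ} {F : Seq N → ℝ} (hF : FiniteDep n F) (z : Seq N) :
    ∫ x, F x ∂μ = transfer^[n] (fun x => cylMass μ n x * F x) z := by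
  have : IsProbabilityMeasure (μ.map fun (x : Seq N) (i : Fin n) => x i) :=
    Measure.isProbabilityMeasure_map (measurable_restrict n).aemeasurable
  have h := integral_fintype (μ := μ.map fun (x : Seq N) (i : Fin n) => x i)
    (f := fun w : Fin n → Fin N => F (prepend w z)) Integrable.of_finite
  rw [integral_map (measurable_restrict n).aemeasurable
    (measurable_of_finite _).aestronglyMeasurable] at h
  rw [hF.eq_comp z, transfer_iterate]
  simp only [Function.comp_def]
  rw [h]
  refine Finset.sum_congr rfl fun w _ => ?_
  rw [map_restrict_singleton μ w z, smul_eq_mul]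
  simp only [prepend_apply]

lemma transfer_cylMass (n : ℕ) (z : Seq N) : transfer^[n] (cylMass μ n) z = 1 := by
  have h := FiniteDep.integral_eq μ (n := n) (F := fun _ => (1 : ℝ)) (fun _ _ _ => rfl) z
  simpa using h.symm

lemma ae_cylMass_pos (n : ℕ) : ∀ᵐ x ∂μ, 0 < cylMass μ n x := by
  obtain ⟨z⟩ : Nonempty (Seq N) := nonempty_of_isProbabilityMeasure μ
  have hsub : {x | ¬ 0 < cylMass μ n x} ⊆
      ⋃ w : {w : Fin n → Fin N // μ (cyl n (prepend w z)) = 0}, cyl n (prepend w.1 z) := by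
    intro x hx
    have hx0 : cylMass μ n x = 0 := le_antisymm (not_lt.1 hx) (cylMass_nonneg μ n x)
    have he : cyl n (prepend (fun i : Fin n => x i) z) = cyl n x :=
      cyl_eq_of_agree (prepend_agree x z)
    refine mem_iUnion.2 ⟨⟨fun i => x i, ?_⟩, ?_⟩
    · rw [he]
      rwa [cylMass, measureReal_eq_zero_iff] at hx0
    · simp only [he]
      exact self_mem_cyl n x
  refine measure_mono_null hsub (measure_iUnion_null fun w => w.2)

lemma entropyAux_eq_integral (ν : ProbabilityMeasure (Seq N)) (n : ℕ) :
    entropyAux ν n = ∫ x, -Real.log (cylMass ν.toMeasure n x) ∂ν.toMeasure := by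
  obtain ⟨z⟩ : Nonempty (Seq N) := nonempty_of_isProbabilityMeasure ν.toMeasure
  have hF : FiniteDep n fun x => -Real.log (cylMass ν.toMeasure n x) := fun x y h => by
    simp only [finiteDep_cylMass ν.toMeasure n x y h]
  rw [hF.integral_eq ν.toMeasure z, transfer_iterate, entropyAux, ← Finset.sum_neg_distrib]
  refine Finset.sum_congr rfl fun w _ => ?_
  rw [cylinder_ofFn w z, mul_neg]
  rfl

/-- **Gibbs' inequality** for weights on words of length `n`. -/
lemma integral_neg_log_cylMass_le {n : ℕ} {Q : Seq N → ℝ} (hQ : FiniteDep n Q)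
    (hpos : ∀ x, 0 < Q x) (hsum : ∀ z, transfer^[n] Q z ≤ 1) :
    ∫ x, -Real.log (cylMass μ n x) ∂μ ≤ ∫ x, -Real.log (Q x) ∂μ := by
  obtain ⟨z⟩ : Nonempty (Seq N) := nonempty_of_isProbabilityMeasure μ
  have hF : FiniteDep n fun x => -Real.log (cylMass μ n x) := fun x y h => by
    simp only [finiteDep_cylMass μ n x y h]
  have hG : FiniteDep n fun x => -Real.log (Q x) := fun x y h => by
    simp only [hQ x y h]
  rw [hF.integral_eq μ z, hG.integral_eq μ z]
  have key : ∀ x, cylMass μ n x * -Real.log (cylMass μ n x) + cylMass μ n x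
      ≤ cylMass μ n x * -Real.log (Q x) + Q x := by
    intro x
    rcases (cylMass_nonneg μ n x).eq_or_lt with h | h
    · simp [← h, (hpos x).le]
    · have h1 := Real.log_le_sub_one_of_pos (div_pos (hpos x) h)
      rw [Real.log_div (hpos x).ne' h.ne'] at h1
      have h2 := mul_le_mul_of_nonneg_left h1 h.le
      have h3 : cylMass μ n x * (Q x / cylMass μ n x - 1) = Q x - cylMass μ n x := by
        field_simp
      rw [h3] at h2
      linarith
  have h := transfer_iterate_mono (n := n) key z
  rw [transfer_iterate_add, transfer_iterate_add] at h
  have h1 : transfer^[n] (fun x => cylMass μ n x) z = 1 := transfer_cylMass μ n z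
  have h2 : transfer^[n] (fun x => Q x) z ≤ 1 := hsum z
  linarith

end Symbolic

section Birkhoff

variable {N : ℕ}

lemma birkhoff_add (φ : Seq N → ℝ) (m n : ℕ) (x : Seq N) :
    birkhoff φ (m + n) x = birkhoff φ m x + birkhoff φ n (shift^[m] x) := by
  simp only [birkhoff, Finset.sum_range_add]
  congr 1
  refine Finset.sum_congr rfl fun k _ => ?_
  rw [← Function.iterate_add_apply, Nat.add_comm]

lemma birkhoff_nonneg {φ : Seq N → ℝ} (h : ∀ x, 0 ≤ φ x) (n : ℕ) (x : Seq N) :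
    0 ≤ birkhoff φ n x := Finset.sum_nonneg fun _ _ => h _

lemma birkhoff_le {φ : Seq N → ℝ} {b : ℝ} (h : ∀ x, φ x ≤ b) (n : ℕ) (x : Seq N) :
    birkhoff φ n x ≤ n * b := by
  have := Finset.sum_le_card_nsmul (Finset.range n) (fun k => φ (shift^[k] x)) b fun _ _ => h _
  simpa [birkhoff] using this

lemma le_birkhoff {φ : Seq N → ℝ} {b : ℝ} (h : ∀ x, b ≤ φ x) (n : ℕ) (x : Seq N) :
    n * b ≤ birkhoff φ n x := by
  have := Finset.card_nsmul_le_sum (Finset.range n) (fun k => φ (shift^[k] x)) b fun _ _ => h _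
  simpa [birkhoff] using this

lemma continuous_shift : Continuous (shift : Seq N → Seq N) :=
  continuous_pi fun n => continuous_apply (n + 1)

lemma continuous_birkhoff {φ : Seq N → ℝ} (hφ : Continuous φ) (n : ℕ) :
    Continuous (birkhoff φ n) :=
  continuous_finsetSum _ fun k _ => hφ.comp (continuous_shift.iterate k)

lemma birkhoff_le_of_mem_cyl {Λ : Seq N → ℝ} {c : ℝ} (hc : 1 ≤ c) (hdist : BddDistortion Λ c)
    {n : ℕ} {x y : Seq N} (hy : y ∈ cyl n x) :
    birkhoff Λ n y ≤ Real.log c + birkhoff Λ n x := by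
  have hc0 : 0 < c := by linarith
  have h := hdist n y x hy
  rwa [← Real.exp_log hc0, ← Real.exp_add, Real.exp_le_exp] at h

variable {μ : Measure (Seq N)}

lemma integrable_birkhoff (hμ : MeasurePreserving shift μ μ) {φ : Seq N → ℝ}
    (hφ : Integrable φ μ) (n : ℕ) : Integrable (birkhoff φ n) μ :=
  integrable_finsetSum _ fun k _ => (hμ.iterate k).integrable_comp_of_integrable hφ

lemma integral_birkhoff (hμ : MeasurePreserving shift μ μ) {φ : Seq N → ℝ}
    (hφ : Integrable φ μ) (n : ℕ) : ∫ x, birkhoff φ n x ∂μ = n * ∫ x, φ x ∂μ := by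
  have h : ∀ k, ∫ x, φ (shift^[k] x) ∂μ = ∫ x, φ x ∂μ := fun k => by
    have := integral_map (μ := μ) (hμ.iterate k).measurable.aemeasurable (f := φ)
      (by rw [(hμ.iterate k).map_eq]; exact hφ.aestronglyMeasurable)
    rw [(hμ.iterate k).map_eq] at this
    exact this.symm
  simp only [birkhoff]
  rw [integral_finsetSum (f := fun k x => φ (shift^[k] x)) _
    fun k _ => (hμ.iterate k).integrable_comp_of_integrable hφ]
  simp [h]

end Birkhoff

/-- The cylinder of length `n` around `x` has mass at least `exp (t S_nΛ) / a n`. -/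
def Heavy {N : ℕ} (μ : Measure (Seq N)) (Λ : Seq N → ℝ) (a : ℕ → ℝ) (t : ℝ) (n : ℕ)
    (x : Seq N) : Prop :=
  ∀ y ∈ cyl n x, Real.exp (t * birkhoff Λ n y) ≤ a n * cylMass μ n x

/-- The weight of an initial word of length `n` when parsing a sequence into heavy words and
single letters. -/
noncomputable def parseWeight {N : ℕ} (μ : Measure (Seq N)) (Λ : Seq N → ℝ) (a : ℕ → ℝ) (t : ℝ)
    (n : ℕ) (x : Seq N) : ℝ :=
  (if Heavy μ Λ a t n x then a n * cylMass μ n x else 0) + if n = 1 then 1 / (2 * N : ℝ) else 0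

/-- The sum over all parsings of the first `L` letters of the product of the weights. -/
noncomputable def parseSum {N : ℕ} (μ : Measure (Seq N)) (Λ : Seq N → ℝ) (a : ℕ → ℝ) (t : ℝ) :
    ℕ → Seq N → ℝ
  | 0, _ => 1
  | L + 1, x => ∑ n : Fin (L + 1),
      parseWeight μ Λ a t (n + 1) x * parseSum μ Λ a t (L - n) (shift^[n + 1] x)

/-- The indicator function of the sequences without heavy initial word of length at most `M`. -/
noncomputable def noHeavy {N : ℕ} (μ : Measure (Seq N)) (Λ : Seq N → ℝ) (a : ℕ → ℝ) (t : ℝ)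
    (M : ℕ) (x : Seq N) : ℝ :=
  if ∃ n, 1 ≤ n ∧ n ≤ M ∧ Heavy μ Λ a t n x then 0 else 1

section Parsing

variable {N : ℕ} (μ : Measure (Seq N)) (Λ : Seq N → ℝ) {a : ℕ → ℝ}
  (t : ℝ)

lemma finiteDep_heavy (a : ℕ → ℝ) (n : ℕ) : FiniteDep n (Heavy μ Λ a t n) := by
  intro x y h
  simp only [Heavy, cyl_eq_of_agree h, finiteDep_cylMass μ n x y h]

lemma finiteDep_parseWeight (a : ℕ → ℝ) (n : ℕ) : FiniteDep n (parseWeight μ Λ a t n) := by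
  intro x y h
  simp only [parseWeight, finiteDep_heavy μ Λ t a n x y h, finiteDep_cylMass μ n x y h]

lemma finiteDep_noHeavy (a : ℕ → ℝ) (M : ℕ) : FiniteDep M (noHeavy μ Λ a t M) := by
  intro x y h
  have : ∀ n, (1 ≤ n ∧ n ≤ M ∧ Heavy μ Λ a t n x) ↔ (1 ≤ n ∧ n ≤ M ∧ Heavy μ Λ a t n y) := by
    intro n
    refine and_congr_right fun _ => and_congr_right fun hn => ?_
    rw [finiteDep_heavy μ Λ t a n x y fun k hk => h k (hk.trans_le hn)]
  simp only [noHeavy, this]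

lemma finiteDep_parseSum (a : ℕ → ℝ) (L : ℕ) : FiniteDep L (parseSum μ Λ a t L) := by
  induction L using Nat.strong_induction_on with
  | _ L ih =>
    cases L with
    | zero => intro x y _; simp [parseSum]
    | succ L =>
      intro x y h
      simp only [parseSum]
      refine Finset.sum_congr rfl fun n _ => ?_
      have hn := n.2
      exact congrArg₂ (· * ·)
        ((finiteDep_parseWeight μ Λ t a (n + 1)).mono (m := L + 1) (by omega) x y h)
        (((ih (L - n) (by omega)).comp_shift (n + 1)).mono (m := L + 1) (by omega) x y h)

lemma noHeavy_nonneg (a : ℕ → ℝ) (M : ℕ) (x : Seq N) : 0 ≤ noHeavy μ Λ a t M x := by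
  unfold noHeavy; split_ifs <;> norm_num

lemma parseWeight_nonneg (ha : ∀ n, 0 ≤ a n) (n : ℕ) (x : Seq N) :
    0 ≤ parseWeight μ Λ a t n x := by
  have := mul_nonneg (ha n) (measureReal_nonneg (μ := μ) (s := cyl n x))
  unfold parseWeight cylMass
  split_ifs <;> positivity

lemma parseSum_nonneg (ha : ∀ n, 0 ≤ a n) (L : ℕ) (x : Seq N) : 0 ≤ parseSum μ Λ a t L x := by
  induction L using Nat.strong_induction_on generalizing x with
  | _ L ih =>
    cases L with
    | zero => simp [parseSum]
    | succ L =>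
      simp only [parseSum]
      exact Finset.sum_nonneg fun n _ =>
        mul_nonneg (parseWeight_nonneg μ Λ t ha _ _) (ih _ (by omega) _)

lemma parseWeight_mul_le_parseSum (ha : ∀ n, 0 ≤ a n) {n L : ℕ} (hn : 1 ≤ n) (hL : n ≤ L)
    (x : Seq N) :
    parseWeight μ Λ a t n x * parseSum μ Λ a t (L - n) (shift^[n] x) ≤ parseSum μ Λ a t L x := by
  obtain ⟨n, rfl⟩ : ∃ k, n = k + 1 := ⟨n - 1, by omega⟩
  obtain ⟨L, rfl⟩ : ∃ k, L = k + 1 := ⟨L - 1, by omega⟩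
  rw [parseSum, Nat.add_sub_add_right]
  exact Finset.single_le_sum (f := fun n : Fin (L + 1) =>
      parseWeight μ Λ a t (n + 1) x * parseSum μ Λ a t (L - n) (shift^[n + 1] x))
    (fun n _ => mul_nonneg (parseWeight_nonneg μ Λ t ha _ _) (parseSum_nonneg μ Λ t ha _ _))
    (Finset.mem_univ (⟨n, by omega⟩ : Fin (L + 1)))

lemma single_letter_le_parseSum (ha : ∀ n, 0 ≤ a n) (L : ℕ) (x : Seq N) :
    1 / (2 * N : ℝ) * parseSum μ Λ a t L (shift x) ≤ parseSum μ Λ a t (L + 1) x := by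
  refine le_trans ?_ (parseWeight_mul_le_parseSum μ Λ t ha le_rfl (Nat.le_add_left 1 L) x)
  refine mul_le_mul_of_nonneg_right ?_ (parseSum_nonneg μ Λ t ha _ _)
  have := mul_nonneg (ha 1) (measureReal_nonneg (μ := μ) (s := cyl 1 x))
  unfold parseWeight cylMass
  split_ifs <;> simp_all

lemma exp_neg_le_parseSum (hN : 0 < N) (ha : ∀ n, 0 ≤ a n) (L : ℕ) (x : Seq N) :
    Real.exp (-(Real.log (2 * N) * L)) ≤ parseSum μ Λ a t L x := by
  have hN' : (0 : ℝ) < 2 * N := by positivity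
  induction L generalizing x with
  | zero => simp [parseSum]
  | succ L ih =>
    refine le_trans ?_ (single_letter_le_parseSum μ Λ t ha L x)
    have h : Real.exp (-(Real.log (2 * N) * (L + 1 : ℕ)))
        = 1 / (2 * N : ℝ) * Real.exp (-(Real.log (2 * N) * L)) := by
      rw [one_div, ← Real.exp_log hN', ← Real.exp_neg, ← Real.exp_add, Real.log_exp]
      congr 1; push_cast; ring
    rw [h]
    exact mul_le_mul_of_nonneg_left (ih _) (by positivity)

lemma parseSum_pos (hN : 0 < N) (ha : ∀ n, 0 ≤ a n) (L : ℕ) (x : Seq N) :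
    0 < parseSum μ Λ a t L x :=
  (Real.exp_pos _).trans_le (exp_neg_le_parseSum μ Λ t hN ha L x)

lemma transfer_parseWeight_le [IsProbabilityMeasure μ]
    (hN : 0 < N) (ha : ∀ n, 0 ≤ a n) (n : ℕ) (z : Seq N) :
    transfer^[n] (parseWeight μ Λ a t n) z ≤ a n + if n = 1 then 1 / 2 else 0 := by
  have h1 : transfer^[n] (parseWeight μ Λ a t n) z
      ≤ transfer^[n] (fun x => a n * cylMass μ n x + if n = 1 then 1 / (2 * N : ℝ) else 0) z := by
    refine transfer_iterate_mono (fun x => ?_) z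
    have := mul_nonneg (ha n) (cylMass_nonneg μ n x)
    unfold parseWeight
    gcongr
    split_ifs <;> simp [this]
  refine h1.trans (le_of_eq ?_)
  rw [transfer_iterate_add, transfer_iterate_const_mul]
  have h2 : transfer^[n] (fun x => cylMass μ n x) z = 1 := transfer_cylMass μ n z
  rw [h2, mul_one]
  congr 1
  split_ifs with h
  · subst h
    simp only [Function.iterate_one, transfer, Finset.sum_const, Finset.card_univ,
      Fintype.card_fin, nsmul_eq_mul]
    have : (N : ℝ) ≠ 0 := by positivity
    field_simp
  · simp [transfer_iterate]

lemma transfer_parseSum_le_one [IsProbabilityMeasure μ]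
    (hN : 0 < N) (ha : ∀ n, 0 ≤ a n) (hsum : HasSum a (1 / 2))
    (L : ℕ) (z : Seq N) : transfer^[L] (parseSum μ Λ a t L) z ≤ 1 := by
  induction L using Nat.strong_induction_on generalizing z with
  | _ L ih =>
    cases L with
    | zero => simp [parseSum]
    | succ L =>
      have h1 : parseSum μ Λ a t (L + 1) = fun x => ∑ n : Fin (L + 1),
          parseWeight μ Λ a t (n + 1) x * parseSum μ Λ a t (L - n) (shift^[n + 1] x) := by
        funext x; rw [parseSum]
      rw [h1, transfer_iterate_finset_sum]
      have h2 : ∀ n : Fin (L + 1), transfer^[L + 1] (fun x => parseWeight μ Λ a t (n + 1) x *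
          parseSum μ Λ a t (L - n) (shift^[n + 1] x)) z
          ≤ a (n + 1) + if (n : ℕ) + 1 = 1 then 1 / 2 else 0 := by
        intro n
        have hn := n.2
        have hb : 0 ≤ a (n + 1) + if (n : ℕ) + 1 = 1 then (1 / 2 : ℝ) else 0 := by
          have := ha (n + 1)
          split_ifs <;> positivity
        have e : ∀ F : Seq N → ℝ,
            transfer^[L + 1] F = transfer^[L - n] (transfer^[n + 1] F) := fun F => by
          rw [← Function.iterate_add_apply, show L - (n : ℕ) + (n + 1) = L + 1 by omega]
        rw [e, transfer_iterate_mul_comp_shift]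
        have h3 := transfer_iterate_mono (n := L - n)
          (F := fun z => transfer^[n + 1] (parseWeight μ Λ a t (n + 1)) z *
            parseSum μ Λ a t (L - n) z)
          (G := fun z => (a (n + 1) + if (n : ℕ) + 1 = 1 then (1 / 2 : ℝ) else 0) *
            parseSum μ Λ a t (L - n) z)
          (fun x => mul_le_mul_of_nonneg_right (transfer_parseWeight_le μ Λ t hN ha _ x)
            (parseSum_nonneg μ Λ t ha _ _)) z
        refine h3.trans ?_
        rw [transfer_iterate_const_mul]
        exact mul_le_of_le_one_right hb (ih (L - n) (by omega) z)
      refine (Finset.sum_le_sum fun n _ => h2 n).trans ?_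
      rw [Fin.sum_univ_eq_sum_range (fun n => a (n + 1) + if n + 1 = 1 then (1 / 2 : ℝ) else 0),
        Finset.sum_add_distrib]
      have h4 := sum_le_hasSum (Finset.range (L + 2)) (fun i _ => ha i) hsum
      rw [Finset.sum_range_succ'] at h4
      have h5 : ∑ n ∈ Finset.range (L + 1), (if n + 1 = 1 then (1 / 2 : ℝ) else 0) = 1 / 2 := by
        simp
      have := ha 0
      rw [h5]
      linarith

/-- Greedy parsing bounds the sum over all parsings from below. -/
lemma exp_le_parseSum (hN : 0 < N) (hΛ : ∀ x, Λ x ≤ 0) (ht : 0 ≤ t) (ha : ∀ n, 0 ≤ a n)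
    (M L : ℕ) (x : Seq N) :
    Real.exp (t * birkhoff Λ L x - Real.log (2 * N) * (birkhoff (noHeavy μ Λ a t M) L x + M))
      ≤ parseSum μ Λ a t L x := by
  have hN' : (0 : ℝ) < 2 * N := by positivity
  have hN1 : (1 : ℝ) ≤ N := by exact_mod_cast hN
  have hK : 0 ≤ Real.log (2 * N) := Real.log_nonneg (by linarith)
  induction L using Nat.strong_induction_on generalizing x with
  | _ L ih =>
    have hnb := birkhoff_nonneg (noHeavy_nonneg μ Λ t a M)
    rcases le_or_gt L M with hLM | hLM
    · refine le_trans (Real.exp_le_exp.2 ?_) (exp_neg_le_parseSum μ Λ t hN ha L x)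
      have h1 : birkhoff Λ L x ≤ 0 := by simpa using birkhoff_le hΛ L x
      have h2 := mul_nonpos_of_nonneg_of_nonpos ht h1
      have h3 : (L : ℝ) ≤ M := by exact_mod_cast hLM
      have h4 : Real.log (2 * N) * L
          ≤ Real.log (2 * N) * (birkhoff (noHeavy μ Λ a t M) L x + M) :=
        mul_le_mul_of_nonneg_left (by linarith [hnb L x]) hK
      linarith
    · by_cases hx : ∃ n, 1 ≤ n ∧ n ≤ M ∧ Heavy μ Λ a t n x
      · obtain ⟨n, hn1, hnM, hg⟩ := hx
        refine le_trans ?_ (parseWeight_mul_le_parseSum μ Λ t ha hn1 (hnM.trans hLM.le) x)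
        have h1 : Real.exp (t * birkhoff Λ n x) ≤ parseWeight μ Λ a t n x := by
          refine (hg x (self_mem_cyl n x)).trans ?_
          unfold parseWeight
          rw [if_pos hg]
          refine le_add_of_nonneg_right ?_
          split_ifs <;> positivity
        have h2 := ih (L - n) (by omega) (shift^[n] x)
        refine le_trans ?_ (mul_le_mul h1 h2 (Real.exp_pos _).le
          (parseWeight_nonneg μ Λ t ha _ _))
        rw [← Real.exp_add, Real.exp_le_exp]
        have e : L = n + (L - n) := by omega
        have e1 := birkhoff_add Λ n (L - n) x
        have e2 := birkhoff_add (noHeavy μ Λ a t M) n (L - n) x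
        rw [← e] at e1 e2
        rw [e1, e2]
        have := mul_nonneg hK (hnb n x)
        nlinarith
      · obtain ⟨L, rfl⟩ : ∃ k, L = k + 1 := ⟨L - 1, by omega⟩
        refine le_trans ?_ (single_letter_le_parseSum μ Λ t ha L x)
        have h2 := ih L (by omega) (shift x)
        refine le_trans ?_ (mul_le_mul_of_nonneg_left h2 (by positivity))
        rw [one_div, ← Real.exp_log (x := (2 * N : ℝ)⁻¹) (by positivity), Real.log_inv,
          ← Real.exp_add, Real.exp_le_exp]
        have e1 := birkhoff_add Λ 1 L x
        have e2 := birkhoff_add (noHeavy μ Λ a t M) 1 L x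
        rw [Nat.add_comm 1 L] at e1 e2
        have e3 : birkhoff (noHeavy μ Λ a t M) 1 x = 1 := by
          simp [birkhoff, noHeavy, hx]
        have e4 : birkhoff Λ 1 x ≤ 0 := by simpa using birkhoff_le hΛ 1 x
        have h5 := mul_nonpos_of_nonneg_of_nonpos ht e4
        simp only [Function.iterate_one] at e1 e2
        rw [e1, e2, e3]
        nlinarith

lemma integral_neg_log_cylMass_le_of_parsing [IsProbabilityMeasure μ]
    (hN : 0 < N) (hμ : MeasurePreserving shift μ μ)
    (hΛint : Integrable Λ μ) (hΛ : ∀ x, Λ x ≤ 0)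
    (ht : 0 ≤ t) (ha : ∀ n, 0 ≤ a n) (hsum : HasSum a (1 / 2)) (M L : ℕ) :
    ∫ x, -Real.log (cylMass μ L x) ∂μ
      ≤ L * (t * -∫ x, Λ x ∂μ) +
        Real.log (2 * N) * (L * (∫ x, noHeavy μ Λ a t M x ∂μ) + M) := by
  have hgI : Integrable (noHeavy μ Λ a t M) μ := (finiteDep_noHeavy μ Λ t a M).integrable μ
  have hI1 : Integrable (fun x => -t * birkhoff Λ L x) μ :=
    (integrable_birkhoff hμ hΛint L).const_mul _
  have hI2 : Integrable (fun x => birkhoff (noHeavy μ Λ a t M) L x + M) μ :=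
    (integrable_birkhoff hμ hgI L).add (integrable_const _)
  have hI3 : Integrable (fun x =>
      Real.log (2 * N) * (birkhoff (noHeavy μ Λ a t M) L x + M)) μ := hI2.const_mul _
  have hQ : FiniteDep L fun x => -Real.log (parseSum μ Λ a t L x) := fun x y h => by
    simp only [finiteDep_parseSum μ Λ t a L x y h]
  calc ∫ x, -Real.log (cylMass μ L x) ∂μ
      ≤ ∫ x, -Real.log (parseSum μ Λ a t L x) ∂μ :=
        integral_neg_log_cylMass_le μ (finiteDep_parseSum μ Λ t a L)
          (parseSum_pos μ Λ t hN ha L) (transfer_parseSum_le_one μ Λ t hN ha hsum L)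
    _ ≤ ∫ x, (-t * birkhoff Λ L x +
          Real.log (2 * N) * (birkhoff (noHeavy μ Λ a t M) L x + M)) ∂μ := by
        refine integral_mono (hQ.integrable μ) (hI1.add hI3) fun x => ?_
        have h := Real.log_le_log (Real.exp_pos _) (exp_le_parseSum μ Λ t hN hΛ ht ha M L x)
        rw [Real.log_exp] at h
        simp only
        linarith
    _ = _ := by
        rw [integral_add hI1 hI3, integral_const_mul, integral_const_mul,
          integral_add (integrable_birkhoff hμ hgI L) (integrable_const _),
          integral_birkhoff hμ hΛint, integral_birkhoff hμ hgI]
        simp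
        ring

lemma integral_neg_log_cylMass_le_log [IsProbabilityMeasure μ] (hN : 0 < N) (L : ℕ) :
    ∫ x, -Real.log (cylMass μ L x) ∂μ ≤ L * Real.log (2 * N) := by
  have hsum : HasSum (fun n : ℕ => if n = 0 then (1 / 2 : ℝ) else 0) (1 / 2) :=
    hasSum_ite_eq 0 (1 / 2)
  have ha : ∀ n : ℕ, (0 : ℝ) ≤ if n = 0 then (1 / 2 : ℝ) else 0 := fun n => by
    split_ifs <;> norm_num
  have hQ : FiniteDep L fun x => -Real.log
      (parseSum μ 0 (fun n : ℕ => if n = 0 then (1 / 2 : ℝ) else 0) 0 L x) := fun x y h => by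
    simp only [finiteDep_parseSum μ 0 0 _ L x y h]
  refine (integral_neg_log_cylMass_le μ (finiteDep_parseSum μ 0 0 _ L)
    (parseSum_pos μ 0 0 hN ha L) (transfer_parseSum_le_one μ 0 0 hN ha hsum L)).trans ?_
  refine (integral_mono (hQ.integrable μ) (integrable_const (L * Real.log (2 * N)))
    fun x => ?_).trans (by simp)
  have h := Real.log_le_log (Real.exp_pos _) (exp_neg_le_parseSum μ 0 0 hN ha L x)
  rw [Real.log_exp] at h
  simp only
  linarith

end Parsing

/-- The set of sequences `x` for which, up to a multiplicative constant, the mass of infinitely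
many cylinders around `x` is at least `exp (t S_nΛ x)`. -/
def heavySet {N : ℕ} (μ : Measure (Seq N)) (Λ : Seq N → ℝ) (t : ℝ) : Set (Seq N) :=
  {x | ∃ C : ℕ, ∃ᶠ n in atTop, Real.exp (t * birkhoff Λ n x - C) ≤ cylMass μ n x}

section HeavySet

variable {N : ℕ} {μ : Measure (Seq N)} {Λ : Seq N → ℝ} {t : ℝ}

lemma measurableSet_heavySet (hΛcont : Continuous Λ) : MeasurableSet (heavySet μ Λ t) := by
  have h : heavySet μ Λ t = ⋃ C : ℕ, ⋂ m : ℕ, ⋃ n : ℕ, ⋃ _ : m ≤ n,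
      {x | Real.exp (t * birkhoff Λ n x - C) ≤ cylMass μ n x} := by
    ext x
    simp only [heavySet, frequently_atTop, mem_iUnion, mem_iInter, exists_prop]
    rfl
  rw [h]
  refine MeasurableSet.iUnion fun C => MeasurableSet.iInter fun m => MeasurableSet.iUnion
    fun n => MeasurableSet.iUnion fun _ => measurableSet_le ?_ (finiteDep_cylMass μ n).measurable
  have := (continuous_birkhoff hΛcont n).measurable
  fun_prop

lemma cylMass_succ_le [IsProbabilityMeasure μ]
    (hμ : MeasurePreserving shift μ μ) (n : ℕ) (x : Seq N) :
    cylMass μ (n + 1) x ≤ cylMass μ n (shift x) := by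
  rw [cylMass, cylMass, ← hμ.measureReal_preimage (measurableSet_cyl n _).nullMeasurableSet]
  exact measureReal_mono fun y hy k hk => hy (k + 1) (by omega)

lemma heavySet_subset_preimage [IsProbabilityMeasure μ]
    (hμ : MeasurePreserving shift μ μ) {b : ℝ} (hb : ∀ x, b ≤ Λ x)
    (ht : 0 ≤ t) : heavySet μ Λ t ⊆ shift ⁻¹' heavySet μ Λ t := by
  rintro x ⟨C, hC⟩
  refine ⟨C + ⌈-(t * b)⌉₊, frequently_atTop.2 fun m => ?_⟩
  obtain ⟨n, hn, h⟩ := frequently_atTop.1 hC (m + 1)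
  obtain ⟨n, rfl⟩ : ∃ k, n = k + 1 := ⟨n - 1, by omega⟩
  refine ⟨n, by omega, le_trans ?_ (h.trans (cylMass_succ_le hμ n x))⟩
  rw [Real.exp_le_exp]
  have e := birkhoff_add Λ 1 n x
  rw [Nat.add_comm 1 n] at e
  have e1 : birkhoff Λ 1 x = Λ x := by simp [birkhoff]
  rw [e, e1]
  have h1 := Nat.le_ceil (-(t * b))
  have h2 := mul_le_mul_of_nonneg_left (hb x) ht
  simp only [Function.iterate_one]
  push_cast
  linarith

lemma ae_mem_or_ae_notMem_heavySet [IsProbabilityMeasure μ]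
    (herg : Ergodic shift μ) (hΛcont : Continuous Λ)
    {b : ℝ} (hb : ∀ x, b ≤ Λ x) (ht : 0 ≤ t) :
    μ (heavySet μ Λ t) = 0 ∨ μ (heavySet μ Λ t)ᶜ = 0 := by
  have h := herg.ae_empty_or_univ_of_ae_le_preimage
    (measurableSet_heavySet hΛcont).nullMeasurableSet
    (heavySet_subset_preimage herg.toMeasurePreserving hb ht).eventuallyLE
  rwa [ae_eq_empty, ae_eq_univ] at h

lemma exists_weights_frequently_heavy {b c : ℝ} (hb : b < 0) (hΛ : ∀ x, Λ x ≤ b)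
    (hc : 1 ≤ c) (hdist : BddDistortion Λ c) {s : ℝ} (hs : 0 ≤ s) (hst : s < t) :
    ∃ a : ℕ → ℝ, (∀ n, 0 ≤ a n) ∧ HasSum a (1 / 2) ∧
      ∀ x ∈ heavySet μ Λ s, ∃ᶠ n in atTop, Heavy μ Λ a t n x := by
  set r := Real.exp ((t - s) * b / 2) with hr
  have hneg : (t - s) * b < 0 := mul_neg_of_pos_of_neg (by linarith) hb
  have hr1 : r < 1 := by rw [hr, Real.exp_lt_one_iff]; linarith
  have hr0 : 0 < r := Real.exp_pos _
  have hκ : 0 < (1 - r) / 2 := by linarith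
  refine ⟨fun n => (1 - r) / 2 * r ^ n, fun n => by positivity, ?_, ?_⟩
  · have h := (hasSum_geometric_of_lt_one hr0.le hr1).mul_left ((1 - r) / 2)
    have e : (1 - r) / 2 * (1 - r)⁻¹ = 1 / 2 := by
      have : 1 - r ≠ 0 := by linarith
      field_simp
    rwa [e] at h
  · rintro x ⟨C, hC⟩
    have hlim : Tendsto (fun n : ℕ => (n : ℝ) * ((t - s) * b / 2)) atTop atBot :=
      tendsto_natCast_atTop_atTop.atTop_mul_const_of_neg (by linarith)
    have hev := hlim.eventually (eventually_le_atBot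
      (Real.log ((1 - r) / 2) - C - t * Real.log c))
    refine (hC.and_eventually hev).mono fun n hn y hy => ?_
    obtain ⟨h1, h2⟩ := hn
    rw [← finiteDep_cylMass μ n x x fun _ _ => rfl]
    refine le_trans ?_ (mul_le_mul_of_nonneg_left h1 (by positivity))
    have e1 : (1 - r) / 2 * r ^ n * Real.exp (s * birkhoff Λ n x - C)
        = Real.exp (Real.log ((1 - r) / 2) + n * ((t - s) * b / 2)
            + (s * birkhoff Λ n x - C)) := by
      rw [Real.exp_add, Real.exp_add, Real.exp_log hκ, Real.exp_nat_mul]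
    rw [e1, Real.exp_le_exp]
    have h3 := mul_le_mul_of_nonneg_left (birkhoff_le_of_mem_cyl hc hdist hy) (hs.trans hst.le)
    have h4 := mul_le_mul_of_nonneg_left (birkhoff_le hΛ n x) (sub_nonneg.2 hst.le)
    nlinarith

lemma integral_neg_log_cylMass_nonneg [IsProbabilityMeasure μ]
    (n : ℕ) : 0 ≤ ∫ x, -Real.log (cylMass μ n x) ∂μ :=
  integral_nonneg fun x => neg_nonneg.2
    (Real.log_nonpos (cylMass_nonneg μ n x) (cylMass_le_one μ n x))

lemma tendsto_integral_noHeavy [IsProbabilityMeasure μ] {a : ℕ → ℝ}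
    (h : ∀ᵐ x ∂μ, ∃ᶠ n in atTop, Heavy μ Λ a t n x) :
    Tendsto (fun M => ∫ x, noHeavy μ Λ a t M x ∂μ) atTop (𝓝 0) := by
  have h0 : ∫ _ : Seq N, (0 : ℝ) ∂μ = 0 := by simp
  rw [← h0]
  refine tendsto_integral_of_dominated_convergence (fun _ => (1 : ℝ))
    (fun M => (finiteDep_noHeavy μ Λ t a M).measurable.aestronglyMeasurable)
    (integrable_const _) (fun M => ae_of_all _ fun x => ?_) ?_
  · unfold noHeavy; split_ifs <;> simp
  · filter_upwards [h] with x hx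
    obtain ⟨n, hn, hg⟩ := frequently_atTop.1 hx 1
    refine tendsto_const_nhds.congr' ?_
    filter_upwards [eventually_ge_atTop n] with M hM
    unfold noHeavy
    rw [if_pos ⟨n, hn, hM, hg⟩]

end HeavySet

section Entropy

variable {N : ℕ} {μ : ProbabilityMeasure (Seq N)} {Λ : Seq N → ℝ} {t : ℝ}

lemma entropyAux_div_nonneg (n : ℕ) : 0 ≤ entropyAux μ n / n := by
  rw [entropyAux_eq_integral]
  exact div_nonneg (integral_neg_log_cylMass_nonneg n) n.cast_nonneg

lemma entropyAux_div_le (hN : 0 < N) (n : ℕ) : entropyAux μ n / n ≤ Real.log (2 * N) := by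
  have hN1 : (1 : ℝ) ≤ N := by exact_mod_cast hN
  rw [entropyAux_eq_integral]
  refine div_le_of_le_mul₀ n.cast_nonneg (Real.log_nonneg (by linarith)) ?_
  rw [mul_comm]
  exact integral_neg_log_cylMass_le_log μ.toMeasure hN n

lemma entropy_le_of_ae_mem_heavySet (hN : 0 < N)
    (hμ : MeasurePreserving shift μ.toMeasure μ.toMeasure)
    (hΛint : Integrable Λ μ.toMeasure) {b c : ℝ} (hb : b < 0) (hΛ : ∀ x, Λ x ≤ b)
    (hc : 1 ≤ c) (hdist : BddDistortion Λ c) {s : ℝ} (hs : 0 ≤ s) (hst : s < t)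
    (h : μ.toMeasure (heavySet μ.toMeasure Λ s)ᶜ = 0) :
    entropy μ ≤ t * -∫ x, Λ x ∂μ.toMeasure := by
  obtain ⟨a, ha, hsum, hfreq⟩ := exists_weights_frequently_heavy (μ := μ.toMeasure) hb hΛ hc hdist
    hs hst
  have hae : ∀ᵐ x ∂μ.toMeasure, ∃ᶠ n in atTop, Heavy μ.toMeasure Λ a t n x := by
    filter_upwards [mem_ae_iff.2 h] with x hx using hfreq x hx
  set K := Real.log (2 * N) with hK
  have hM : ∀ M : ℕ, entropy μ ≤
      t * -(∫ x, Λ x ∂μ.toMeasure) + K * ∫ x, noHeavy μ.toMeasure Λ a t M x ∂μ.toMeasure := by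
    intro M
    have hlim : Tendsto (fun L : ℕ => t * -(∫ x, Λ x ∂μ.toMeasure) +
        K * (∫ x, noHeavy μ.toMeasure Λ a t M x ∂μ.toMeasure) + K * M / (L : ℝ)) atTop
        (𝓝 (t * -(∫ x, Λ x ∂μ.toMeasure) +
          K * (∫ x, noHeavy μ.toMeasure Λ a t M x ∂μ.toMeasure) + 0)) :=
      tendsto_const_nhds.add (tendsto_const_div_atTop_nhds_zero_nat _)
    rw [add_zero] at hlim
    rw [← hlim.liminf_eq, entropy]
    refine liminf_le_liminf ?_ ?_ hlim.isCoboundedUnder_ge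
    · filter_upwards [eventually_gt_atTop 0] with L hL
      have hL' : (0 : ℝ) < L := by exact_mod_cast hL
      rw [entropyAux_eq_integral, div_le_iff₀ hL']
      refine (integral_neg_log_cylMass_le_of_parsing μ.toMeasure Λ t hN hμ hΛint
        (fun x => (hΛ x).trans hb.le) (hs.trans hst.le) ha hsum M L).trans (le_of_eq ?_)
      field_simp
      ring
    · exact isBoundedUnder_of ⟨0, fun n => entropyAux_div_nonneg n⟩
  have hlim := ((tendsto_integral_noHeavy hae).const_mul K).const_add
    (t * -∫ x, Λ x ∂μ.toMeasure)
  rw [mul_zero, add_zero] at hlim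
  exact ge_of_tendsto' hlim hM

lemma measure_heavySet_ne_zero (hN : 0 < N)
    (hμ : MeasurePreserving shift μ.toMeasure μ.toMeasure) (hΛcont : Continuous Λ)
    (hΛint : Integrable Λ μ.toMeasure) {b : ℝ} (hb : ∀ x, b ≤ Λ x) (hb0 : b < 0)
    (ht : 0 < t) (h : entropy μ < t * -∫ x, Λ x ∂μ.toMeasure) :
    μ.toMeasure (heavySet μ.toMeasure Λ t) ≠ 0 := by
  intro h0
  obtain ⟨q, hq1, hq2⟩ := exists_between h
  have hfreq : ∃ᶠ n : ℕ in atTop, entropyAux μ n / n < q :=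
    frequently_lt_of_liminf_lt
      (isBoundedUnder_of ⟨Real.log (2 * N), fun n => entropyAux_div_le hN n⟩).isCoboundedUnder_ge
      hq1
  set φ : ℕ → Seq N → ℝ := fun n x =>
    (-Real.log (cylMass μ.toMeasure n x) + t * birkhoff Λ n x) / n + t * -b with hφ
  have hφ0 : ∀ n x, 0 ≤ φ n x := by
    intro n x
    rcases Nat.eq_zero_or_pos n with rfl | hn
    · simp only [hφ, Nat.cast_zero, div_zero, zero_add]
      exact mul_nonneg ht.le (by linarith)
    · have hn' : (0 : ℝ) < n := by exact_mod_cast hn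
      have h1 := Real.log_nonpos (cylMass_nonneg μ.toMeasure n x) (cylMass_le_one μ.toMeasure n x)
      have h2 := mul_le_mul_of_nonneg_left (le_birkhoff hb n x) ht.le
      have h3 : t * b ≤ (-Real.log (cylMass μ.toMeasure n x) + t * birkhoff Λ n x) / n := by
        rw [le_div_iff₀ hn']
        linarith
      simp only [hφ]
      linarith
  have hdep : ∀ n, FiniteDep n fun x => -Real.log (cylMass μ.toMeasure n x) := fun n x y h => by
    simp only [finiteDep_cylMass μ.toMeasure n x y h]
  have hmeas : ∀ n, Measurable (φ n) := fun n =>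
    (((hdep n).measurable.add ((continuous_birkhoff hΛcont n).measurable.const_mul t)).div_const
      _).add_const _
  have hI1 : ∀ n, Integrable (fun x => -Real.log (cylMass μ.toMeasure n x) + t * birkhoff Λ n x)
      μ.toMeasure := fun n =>
    ((hdep n).integrable μ.toMeasure).add ((integrable_birkhoff hμ hΛint n).const_mul t)
  have hφ_int : ∀ n, Integrable (φ n) μ.toMeasure := fun n =>
    ((hI1 n).div_const _).add (integrable_const _)
  have hval : ∀ n : ℕ, 0 < n → ∫ x, φ n x ∂μ.toMeasure
      = entropyAux μ n / n - t * -(∫ x, Λ x ∂μ.toMeasure) + t * -b := by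
    intro n hn
    have hn' : (n : ℝ) ≠ 0 := by positivity
    simp only [hφ]
    rw [integral_add ((hI1 n).div_const _) (integrable_const _), integral_div,
      integral_add ((hdep n).integrable μ.toMeasure)
        ((integrable_birkhoff hμ hΛint n).const_mul t),
      integral_const_mul, integral_birkhoff hμ hΛint, entropyAux_eq_integral]
    simp only [integral_const, probReal_univ, smul_eq_mul, one_mul]
    field_simp
    ring
  have hev : ∀ᵐ x ∂μ.toMeasure, ∀ᶠ n in atTop, t * -b ≤ φ n x := by
    have hpos : ∀ᵐ x ∂μ.toMeasure, ∀ n, 0 < cylMass μ.toMeasure n x :=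
      ae_all_iff.2 fun n => ae_cylMass_pos μ.toMeasure n
    filter_upwards [measure_eq_zero_iff_ae_notMem.1 h0, hpos] with x hx hp
    have hx' : ∀ᶠ n in atTop, ¬ Real.exp (t * birkhoff Λ n x - (0 : ℕ))
        ≤ cylMass μ.toMeasure n x := by
      by_contra hcon
      exact hx ⟨0, hcon⟩
    filter_upwards [hx'] with n hn
    have h1 := Real.log_le_log (hp n) (not_le.1 hn).le
    rw [Real.log_exp, Nat.cast_zero, sub_zero] at h1
    simp only [hφ]
    have : 0 ≤ (-Real.log (cylMass μ.toMeasure n x) + t * birkhoff Λ n x) / n :=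
      div_nonneg (by linarith) n.cast_nonneg
    linarith
  have hfatou := lintegral_liminf_le (μ := μ.toMeasure) (u := atTop)
    (f := fun n x => ENNReal.ofReal (φ n x)) fun n => (hmeas n).ennreal_ofReal
  have hleft : ENNReal.ofReal (t * -b)
      ≤ ∫⁻ x, liminf (fun n => ENNReal.ofReal (φ n x)) atTop ∂μ.toMeasure := by
    have : ∫⁻ _, ENNReal.ofReal (t * -b) ∂μ.toMeasure = ENNReal.ofReal (t * -b) := by simp
    rw [← this]
    refine lintegral_mono_ae ?_
    filter_upwards [hev] with x hx
    refine le_liminf_of_le (by isBoundedDefault) ?_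
    filter_upwards [hx] with n hn using ENNReal.ofReal_le_ofReal hn
  have hright : liminf (fun n => ∫⁻ x, ENNReal.ofReal (φ n x) ∂μ.toMeasure) atTop
      ≤ ENNReal.ofReal (q - t * -(∫ x, Λ x ∂μ.toMeasure) + t * -b) := by
    refine liminf_le_of_frequently_le ?_
    refine (hfreq.and_eventually (eventually_gt_atTop 0)).mono fun n hn => ?_
    rw [← ofReal_integral_eq_lintegral_ofReal (hφ_int n) (ae_of_all _ (hφ0 n)), hval n hn.2]
    exact ENNReal.ofReal_le_ofReal (by linarith [hn.1])
  have hfin := hleft.trans (hfatou.trans hright)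
  have hpos : 0 < t * -b := mul_pos ht (by linarith)
  rw [ENNReal.ofReal_le_ofReal_iff'] at hfin
  rcases hfin with h1 | h1 <;> linarith

end Entropy

section TreeMetric

variable {N : ℕ} {Λ : Seq N → ℝ} {b c t : ℝ}

lemma sWord_ofFn (n : ℕ) (x : Seq N) :
    sWord Λ (List.ofFn fun k : Fin n => x k)
      = sSup ((fun y => Real.exp (birkhoff Λ n y)) '' cyl n x) := by
  rw [sWord, cylinder_ofFn _ x, cyl_eq_of_agree (prepend_agree x x), List.length_ofFn]

lemma exists_treeDist_bounds (hdist : BddDistortion Λ c) {x y : Seq N} (hxy : x ≠ y) :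
    ∃ n, (∀ k < n, x k = y k) ∧ x n ≠ y n ∧ Real.exp (birkhoff Λ n x) ≤ treeDist Λ x y ∧
      treeDist Λ x y ≤ c * Real.exp (birkhoff Λ n x) := by
  have hex : ∃ n, x n ≠ y n := Function.ne_iff.1 hxy
  set n := Nat.find hex with hn
  have hlt : ∀ k < n, x k = y k := fun k hk => not_not.1 (Nat.find_min hex hk)
  have hne : x n ≠ y n := Nat.find_spec hex
  have hS : {m : ℕ | ∀ k < m, x k = y k} = Iic n := by
    ext m
    refine ⟨fun h => ?_, fun h k hk => hlt k (hk.trans_le h)⟩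
    by_contra hm
    exact hne (h n (not_le.1 hm))
  have hd : treeDist Λ x y = sSup ((fun y => Real.exp (birkhoff Λ n y)) '' cyl n x) := by
    rw [treeDist, if_neg hxy, sWord_ofFn, hS, csSup_Iic]
  have hub : ∀ v ∈ (fun y => Real.exp (birkhoff Λ n y)) '' cyl n x,
      v ≤ c * Real.exp (birkhoff Λ n x) := by
    rintro _ ⟨u, hu, rfl⟩
    exact hdist n u x hu
  refine ⟨n, hlt, hne, ?_, ?_⟩
  · rw [hd]
    exact le_csSup ⟨_, hub⟩ ⟨x, self_mem_cyl n x, rfl⟩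
  · rw [hd]
    exact csSup_le ⟨_, x, self_mem_cyl n x, rfl⟩ hub

lemma treeDist_le_treeDiam {A : Set (Seq N)} {x y : Seq N} (hx : x ∈ A) (hy : y ∈ A) :
    ENNReal.ofReal (treeDist Λ x y) ≤ treeDiam Λ A :=
  (le_iSup₂ (f := fun j (_ : j ∈ A) => ENNReal.ofReal (treeDist Λ x j)) y hy).trans
    (le_iSup₂ (f := fun i (_ : i ∈ A) => ⨆ j ∈ A, ENNReal.ofReal (treeDist Λ i j)) x hx)

lemma treeDiam_empty : treeDiam Λ ∅ = 0 := by simp [treeDiam]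

lemma treeDiam_cyl_le (hc : 1 ≤ c) (hdist : BddDistortion Λ c) (hΛ : ∀ x, Λ x ≤ 0)
    (n : ℕ) (x : Seq N) :
    treeDiam Λ (cyl n x) ≤ ENNReal.ofReal (c ^ 2 * Real.exp (birkhoff Λ n x)) := by
  refine iSup₂_le fun y hy => iSup₂_le fun z hz => ENNReal.ofReal_le_ofReal ?_
  by_cases hyz : y = z
  · rw [treeDist, if_pos hyz]
    positivity
  · obtain ⟨m, -, hm2, -, hm4⟩ := exists_treeDist_bounds hdist hyz
    have hnm : n ≤ m := by
      by_contra h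
      exact hm2 ((hy m (not_le.1 h)).trans (hz m (not_le.1 h)).symm)
    obtain ⟨k, rfl⟩ := Nat.exists_eq_add_of_le hnm
    have h1 : birkhoff Λ k (shift^[n] y) ≤ 0 := by simpa using birkhoff_le hΛ k (shift^[n] y)
    have h2 : Real.exp (birkhoff Λ (n + k) y) ≤ Real.exp (birkhoff Λ n y) := by
      rw [Real.exp_le_exp, birkhoff_add]
      linarith
    have h3 := hdist n y x hy
    calc treeDist Λ y z ≤ c * Real.exp (birkhoff Λ (n + k) y) := hm4
      _ ≤ c * (c * Real.exp (birkhoff Λ n x)) :=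
        mul_le_mul_of_nonneg_left (h2.trans h3) (by linarith)
      _ = _ := by ring

lemma treeHMeasure_heavySet_ne_top (μ : Measure (Seq N)) [IsProbabilityMeasure μ]
    (hb : b < 0) (hΛ : ∀ x, Λ x ≤ b) (hc : 1 ≤ c) (hdist : BddDistortion Λ c) {s : ℝ}
    (hs : 0 ≤ s) (hst : s < t) : treeHMeasure Λ t (heavySet μ Λ s) ≠ ⊤ := by
  obtain ⟨z⟩ : Nonempty (Seq N) := nonempty_of_isProbabilityMeasure μ
  obtain ⟨a, ha, hsum, hfreq⟩ := exists_weights_frequently_heavy (μ := μ) hb hΛ hc hdist hs hst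
  have ht : 0 < t := hs.trans_lt hst
  have hfin : ∑' n, ENNReal.ofReal ((c ^ 2) ^ t * a n) ≠ ⊤ :=
    (hsum.summable.mul_left _).tsum_ofReal_ne_top
  refine ne_top_of_le_ne_top hfin (iSup₂_le fun δ hδ => ?_)
  obtain ⟨m, hm⟩ : ∃ m : ℕ, ENNReal.ofReal (c ^ 2 * Real.exp (m * b)) ≤ δ := by
    have h1 : Tendsto (fun m : ℕ => c ^ 2 * Real.exp (m * b)) atTop (𝓝 (c ^ 2 * 0)) :=
      (Real.tendsto_exp_atBot.comp
        (tendsto_natCast_atTop_atTop.atTop_mul_const_of_neg hb)).const_mul _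
    have h2 := ENNReal.tendsto_ofReal h1
    rw [mul_zero, ENNReal.ofReal_zero] at h2
    exact ((h2.eventually (gt_mem_nhds hδ)).mono fun _ h => h.le).exists
  set g : (Σ n : ℕ, Fin n → Fin N) → Set (Seq N) := fun p =>
    if m ≤ p.1 ∧ Heavy μ Λ a t p.1 (prepend p.2 z) then cyl p.1 (prepend p.2 z) else ∅ with hg
  let _ : Encodable (Σ n : ℕ, Fin n → Fin N) := Encodable.ofCountable _
  have hdiam : ∀ p, treeDiam Λ (g p) ≤ δ := by
    intro p
    simp only [hg]
    split_ifs with h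
    · refine (treeDiam_cyl_le hc hdist (fun x => (hΛ x).trans hb.le) _ _).trans
        (le_trans (ENNReal.ofReal_le_ofReal ?_) hm)
      refine mul_le_mul_of_nonneg_left (Real.exp_le_exp.2 ?_) (by positivity)
      refine (birkhoff_le hΛ _ _).trans (mul_le_mul_of_nonpos_right ?_ hb.le)
      exact_mod_cast h.1
    · rw [treeDiam_empty]; exact zero_le
  have hpow : ∀ p, treeDiam Λ (g p) ^ t
      ≤ ENNReal.ofReal ((c ^ 2) ^ t * a p.1 * cylMass μ p.1 (prepend p.2 z)) := by
    intro p
    simp only [hg]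
    split_ifs with h
    · refine (ENNReal.rpow_le_rpow
        (treeDiam_cyl_le hc hdist (fun x => (hΛ x).trans hb.le) _ _) ht.le).trans ?_
      rw [ENNReal.ofReal_rpow_of_nonneg (by positivity) ht.le]
      refine ENNReal.ofReal_le_ofReal ?_
      rw [Real.mul_rpow (by positivity) (Real.exp_pos _).le, ← Real.exp_mul, mul_comm _ t, mul_assoc]
      exact mul_le_mul_of_nonneg_left (h.2 _ (self_mem_cyl _ _)) (by positivity)
    · rw [treeDiam_empty, ENNReal.zero_rpow_of_pos ht]; exact zero_le
  refine (iInf₂_le (fun k => ⋃ p ∈ Encodable.decode₂ _ k, g p) ?_).trans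
    ((iInf_le _ fun k => ?_).trans ?_)
  · rw [Encodable.iUnion_decode₂]
    intro x hx
    obtain ⟨n, hn, hh⟩ := frequently_atTop.1 (hfreq x hx) m
    have e := prepend_agree (n := n) x z
    refine mem_iUnion.2 ⟨⟨n, fun i => x i⟩, ?_⟩
    simp only [hg]
    rw [if_pos ⟨hn, by rwa [finiteDep_heavy μ Λ t a n _ x e]⟩, cyl_eq_of_agree e]
    exact self_mem_cyl n x
  · exact Encodable.iUnion_decode₂_cases (C := fun A => treeDiam Λ A ≤ δ)
      (by rw [treeDiam_empty]; exact zero_le) hdiam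
  · rw [tsum_iUnion_decode₂ (fun A => treeDiam Λ A ^ t)
      (by rw [treeDiam_empty, ENNReal.zero_rpow_of_pos ht])]
    refine (ENNReal.tsum_le_tsum hpow).trans ?_
    rw [ENNReal.tsum_sigma']
    refine ENNReal.tsum_le_tsum fun n => ?_
    have hc2 : 0 ≤ (c ^ 2) ^ t * a n := mul_nonneg (by positivity) (ha n)
    have h1 : ∑ w : Fin n → Fin N, cylMass μ n (prepend w z) = 1 := by
      rw [← transfer_iterate n (cylMass μ n) z, transfer_cylMass]
    rw [tsum_fintype, ← ENNReal.ofReal_sum_of_nonneg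
      fun w _ => mul_nonneg hc2 (cylMass_nonneg μ _ _), ← Finset.mul_sum]
    dsimp only
    rw [h1, mul_one]

/-- Mass distribution estimate for a set of small diameter. -/
lemma measure_inter_le_treeDiam (μ : Measure (Seq N)) [IsProbabilityMeasure μ] {b' : ℝ}
    (hb : b < 0) (hΛ : ∀ x, Λ x ≤ b) (hb' : ∀ x, b' ≤ Λ x) (hb0 : b' < 0)
    (hdist : BddDistortion Λ c) (ht : 0 < t) (C : ℝ) (m : ℕ) {A : Set (Seq N)}
    (hA : treeDiam Λ A ≤ ENNReal.ofReal (Real.exp (m * b'))) :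
    μ (A ∩ {x | ∀ n ≥ m, cylMass μ n x ≤ Real.exp (t * birkhoff Λ n x - C)})
      ≤ ENNReal.ofReal (Real.exp (-C)) * treeDiam Λ A ^ t := by
  rcases (A ∩ {x | ∀ n ≥ m, cylMass μ n x ≤ Real.exp (t * birkhoff Λ n x - C)}).eq_empty_or_nonempty
    with h | ⟨x, hxA, hx⟩
  · rw [h, measure_empty]; exact zero_le
  by_cases hex : ∃ n, ∃ y ∈ A, y n ≠ x n
  · obtain ⟨y, hyA, hyx⟩ := Nat.find_spec hex
    set n := Nat.find hex with hn
    have hsub : A ⊆ cyl n x := fun u hu k hk => by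
      by_contra hne
      exact Nat.find_min hex hk ⟨u, hu, hne⟩
    have hxy : x ≠ y := fun h => hyx (by rw [h])
    obtain ⟨p, hp1, hp2, hp3, -⟩ := exists_treeDist_bounds hdist hxy
    have hpn : p = n := by
      rcases lt_trichotomy p n with h | h | h
      · exact absurd (hsub hyA p h).symm hp2
      · exact h
      · exact absurd (hp1 n h).symm hyx
    rw [hpn] at hp3
    have hd : ENNReal.ofReal (Real.exp (birkhoff Λ n x)) ≤ treeDiam Λ A :=
      (ENNReal.ofReal_le_ofReal hp3).trans (treeDist_le_treeDiam hxA hyA)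
    have hmn : m ≤ n := by
      have h1 := (ENNReal.ofReal_le_ofReal_iff (Real.exp_pos _).le).1 (hd.trans hA)
      rw [Real.exp_le_exp] at h1
      have h2 := (le_birkhoff hb' n x).trans h1
      have h3 : (m : ℝ) ≤ n := by
        by_contra hlt
        nlinarith [not_le.1 hlt]
      exact_mod_cast h3
    calc _ ≤ μ (cyl n x) := measure_mono (inter_subset_left.trans hsub)
      _ = ENNReal.ofReal (cylMass μ n x) := (ofReal_measureReal (measure_ne_top _ _)).symm
      _ ≤ ENNReal.ofReal (Real.exp (t * birkhoff Λ n x - C)) :=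
        ENNReal.ofReal_le_ofReal (hx n hmn)
      _ = ENNReal.ofReal (Real.exp (-C)) * ENNReal.ofReal (Real.exp (birkhoff Λ n x)) ^ t := by
        rw [ENNReal.ofReal_rpow_of_pos (Real.exp_pos _), ← Real.exp_mul,
          ← ENNReal.ofReal_mul (Real.exp_pos _).le, ← Real.exp_add]
        congr 2; ring
      _ ≤ _ := by gcongr
  · have hAx : A ⊆ {x} := fun y hy => by
      by_contra hne
      obtain ⟨n, hn⟩ := Function.ne_iff.1 hne
      exact hex ⟨n, y, hy, hn⟩
    have h0 : μ {x} = 0 := by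
      have hlim : Tendsto (fun n : ℕ => ENNReal.ofReal (Real.exp (n * (t * b) + -C))) atTop
          (𝓝 0) := by
        have h1 : Tendsto (fun n : ℕ => Real.exp (n * (t * b) + -C)) atTop (𝓝 0) :=
          Real.tendsto_exp_atBot.comp (tendsto_atBot_add_const_right _ _
            (tendsto_natCast_atTop_atTop.atTop_mul_const_of_neg (mul_neg_of_pos_of_neg ht hb)))
        simpa using ENNReal.tendsto_ofReal h1
      refine le_antisymm (ge_of_tendsto hlim ?_) zero_le
      filter_upwards [eventually_ge_atTop m] with n hn
      calc μ {x} ≤ μ (cyl n x) := measure_mono (singleton_subset_iff.2 (self_mem_cyl n x))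
        _ = ENNReal.ofReal (cylMass μ n x) := (ofReal_measureReal (measure_ne_top _ _)).symm
        _ ≤ _ := by
          refine ENNReal.ofReal_le_ofReal ((hx n hn).trans (Real.exp_le_exp.2 ?_))
          have := mul_le_mul_of_nonneg_left (birkhoff_le hΛ n x) ht.le
          linarith
    rw [measure_mono_null (inter_subset_left.trans hAx) h0]
    exact zero_le

lemma treeHMeasure_eq_top (μ : Measure (Seq N)) [IsProbabilityMeasure μ] {b' : ℝ}
    (hb : b < 0) (hΛ : ∀ x, Λ x ≤ b) (hb' : ∀ x, b' ≤ Λ x) (hb0 : b' < 0)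
    (hdist : BddDistortion Λ c) (ht : 0 < t) (h0 : μ (heavySet μ Λ t) = 0)
    {Ξ : Set (Seq N)} (hΞ : μ Ξ = 1) : treeHMeasure Λ t Ξ = ⊤ := by
  refine ENNReal.eq_top_of_forall_nnreal_le fun r => ?_
  set C : ℕ := ⌈2 * (r : ℝ)⌉₊ with hC
  have hCr : 2 * (r : ℝ) ≤ Real.exp C := by
    have h1 := Nat.le_ceil (2 * (r : ℝ))
    have h2 := Real.add_one_le_exp (C : ℝ)
    linarith
  set E : ℕ → Set (Seq N) := fun m =>
    {x | ∀ n ≥ m, cylMass μ n x ≤ Real.exp (t * birkhoff Λ n x - C)} with hE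
  have hmono : Monotone fun m => Ξ ∩ E m := fun m m' hmm =>
    inter_subset_inter_right _ fun x hx n hn => hx n (le_trans hmm hn)
  have hfull : μ (⋃ m, Ξ ∩ E m) = 1 := by
    refine le_antisymm prob_le_one ?_
    have hsub : Ξ ⊆ (⋃ m, Ξ ∩ E m) ∪ heavySet μ Λ t := by
      intro x hx
      by_cases hxh : x ∈ heavySet μ Λ t
      · exact Or.inr hxh
      · left
        have h1 : ∀ᶠ n in atTop, ¬ Real.exp (t * birkhoff Λ n x - C) ≤ cylMass μ n x := by
          by_contra hcon
          exact hxh ⟨C, hcon⟩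
        obtain ⟨m, hm⟩ := eventually_atTop.1 h1
        exact mem_iUnion.2 ⟨m, hx, fun n hn => (not_le.1 (hm n hn)).le⟩
    calc 1 = μ Ξ := hΞ.symm
      _ ≤ μ (⋃ m, Ξ ∩ E m) + μ (heavySet μ Λ t) := (measure_mono hsub).trans (measure_union_le _ _)
      _ = _ := by rw [h0, add_zero]
  obtain ⟨m, hm⟩ : ∃ m, (1 / 2 : ℝ≥0∞) < μ (Ξ ∩ E m) := by
    have hlim := tendsto_measure_iUnion_atTop (μ := μ) hmono
    rw [hfull] at hlim
    refine (hlim.eventually (lt_mem_nhds ?_)).exists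
    rw [one_div]
    exact ENNReal.one_half_lt_one
  refine le_trans ?_ (le_iSup₂ (f := fun (δ : ℝ≥0∞) (_ : 0 < δ) =>
    ⨅ (f : ℕ → Set (Seq N)) (_ : Ξ ⊆ ⋃ n, f n) (_ : ∀ n, treeDiam Λ (f n) ≤ δ),
      ∑' n, treeDiam Λ (f n) ^ t) (ENNReal.ofReal (Real.exp (m * b')))
    (ENNReal.ofReal_pos.2 (Real.exp_pos _)))
  refine le_iInf₂ fun f hf => le_iInf fun hδ => ?_
  have h1 : (1 / 2 : ℝ≥0∞) ≤ ENNReal.ofReal (Real.exp (-C)) * ∑' n, treeDiam Λ (f n) ^ t := by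
    rw [← ENNReal.tsum_mul_left]
    calc (1 / 2 : ℝ≥0∞) ≤ μ (Ξ ∩ E m) := hm.le
      _ ≤ μ (⋃ n, f n ∩ E m) := by
        rw [← iUnion_inter]
        exact measure_mono (inter_subset_inter_left _ hf)
      _ ≤ ∑' n, μ (f n ∩ E m) := measure_iUnion_le _
      _ ≤ _ := ENNReal.tsum_le_tsum fun n =>
        measure_inter_le_treeDiam μ hb hΛ hb' hb0 hdist ht C m (hδ n)
  calc (r : ℝ≥0∞) = ENNReal.ofReal (2 * r) * (1 / 2) := by
        rw [ENNReal.ofReal_mul zero_le_two, ENNReal.ofReal_coe_nnreal, ENNReal.ofReal_ofNat,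
          mul_comm, one_div, ← mul_assoc, ENNReal.inv_mul_cancel two_ne_zero ENNReal.ofNat_ne_top,
          one_mul]
    _ ≤ ENNReal.ofReal (Real.exp C) *
        (ENNReal.ofReal (Real.exp (-C)) * ∑' n, treeDiam Λ (f n) ^ t) :=
      mul_le_mul' (ENNReal.ofReal_le_ofReal hCr) h1
    _ = _ := by
      rw [← mul_assoc, ← ENNReal.ofReal_mul (Real.exp_pos _).le, ← Real.exp_add]
      simp

end TreeMetric

/-- **Proposition 6.4.**  For an ergodic shift-invariant probability measure `μ` on `Σ^ℕ`,
the upper Hausdorff dimension of `μ` (with respect to the metric `d(i,j) = s_{i∧j}`),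
`inf { dim_H Ξ : μ(Ξ) = 1 }`, equals `-h(μ)/∫Λ dμ`. -/
theorem upper_hausdorff_dimension_ergodic
    {N : ℕ} (hN : 0 < N)
    (Λ : Seq N → ℝ) (hΛcont : Continuous Λ)
    (cmin cmax : ℝ) (hcmax : cmax < 0) (hccmin : cmin ≤ cmax)
    (hΛbdd : ∀ x, Λ x ∈ Set.Icc cmin cmax)
    (c : ℝ) (hc : 1 ≤ c) (hdist : BddDistortion Λ c)
    (μ : ProbabilityMeasure (Seq N)) (herg : Ergodic shift μ.toMeasure) :
    (⨅ (Ξ : Set (Seq N)) (_ : μ.toMeasure Ξ = 1), treeDimH Λ Ξ)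
      = ENNReal.ofReal (-(entropy μ) / ∫ x, Λ x ∂μ.toMeasure) := by
  have hmin : ∀ x, cmin ≤ Λ x := fun x => (hΛbdd x).1
  have hmax : ∀ x, Λ x ≤ cmax := fun x => (hΛbdd x).2
  have hcmin : cmin < 0 := hccmin.trans_lt hcmax
  have hμ := herg.toMeasurePreserving
  have hΛint : Integrable Λ μ.toMeasure :=
    Integrable.of_bound hΛcont.measurable.aestronglyMeasurable (-cmin) (ae_of_all _ fun x => by
      rw [Real.norm_eq_abs, abs_le]
      constructor <;> linarith [hmin x, hmax x])
  have hχ : 0 < -∫ x, Λ x ∂μ.toMeasure := by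
    have h := integral_mono hΛint (integrable_const cmax) hmax
    simp only [integral_const, probReal_univ, smul_eq_mul, one_mul] at h
    linarith
  set χ := -∫ x, Λ x ∂μ.toMeasure with hχdef
  have hD : -(entropy μ) / ∫ x, Λ x ∂μ.toMeasure = entropy μ / χ := by
    rw [hχdef, div_neg, neg_div]
  rw [hD]
  have hent : 0 ≤ entropy μ := by
    refine le_liminf_of_le ?_ (Eventually.of_forall fun n => entropyAux_div_nonneg n)
    exact (isBoundedUnder_of
      ⟨Real.log (2 * N), fun n => entropyAux_div_le hN n⟩).isCoboundedUnder_ge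
  have hD0 : 0 ≤ entropy μ / χ := div_nonneg hent hχ.le
  refine le_antisymm ?_ ?_
  · refine ENNReal.le_of_forall_pos_le_add fun ε hε _ => ?_
    have hε' : (0 : ℝ) < ε := hε
    set s := entropy μ / χ + ε with hs
    have hs0 : 0 < s := by positivity
    have hlt : entropy μ < s * χ := by
      rw [← div_lt_iff₀ hχ]; linarith
    have hfull : μ.toMeasure (heavySet μ.toMeasure Λ s) = 1 := by
      rw [← prob_compl_eq_zero_iff (measurableSet_heavySet hΛcont)]
      exact (ae_mem_or_ae_notMem_heavySet herg hΛcont hmin hs0.le).resolve_left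
        (measure_heavySet_ne_zero hN hμ hΛcont hΛint hmin hcmin hs0 hlt)
    rw [← ENNReal.ofReal_coe_nnreal (p := ε), ← ENNReal.ofReal_add hD0 hε'.le]
    refine (iInf₂_le (f := fun (Ξ : Set (Seq N)) (_ : μ.toMeasure Ξ = 1) => treeDimH Λ Ξ)
      (heavySet μ.toMeasure Λ s) hfull).trans (iSup₂_le fun t ht => ?_)
    by_contra hcon
    rw [not_le, ← ENNReal.ofReal_coe_nnreal (p := t)] at hcon
    exact treeHMeasure_heavySet_ne_top μ.toMeasure hcmax hmax hc hdist hs0.le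
      (ENNReal.ofReal_lt_ofReal_iff'.1 hcon).1 ht
  · refine le_iInf₂ fun Ξ hΞ => le_of_forall_lt_imp_le_of_dense fun q hq => ?_
    lift q to ℝ≥0 using (hq.trans ENNReal.ofReal_lt_top).ne
    rcases eq_zero_or_pos q with rfl | hq0
    · exact zero_le
    have hq0' : (0 : ℝ) < q := hq0
    rw [← ENNReal.ofReal_coe_nnreal, ENNReal.ofReal_lt_ofReal_iff'] at hq
    obtain ⟨s, hqs, hsD⟩ := exists_between hq.1
    have hnull : μ.toMeasure (heavySet μ.toMeasure Λ q) = 0 := by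
      refine (ae_mem_or_ae_notMem_heavySet herg hΛcont hmin hq0'.le).resolve_right fun h => ?_
      have h1 := entropy_le_of_ae_mem_heavySet hN hμ hΛint hcmax hmax hc hdist hq0'.le hqs h
      rw [lt_div_iff₀ hχ] at hsD
      linarith
    exact le_iSup₂ (f := fun (t : ℝ≥0) (_ : treeHMeasure Λ t Ξ = ⊤) => (t : ℝ≥0∞)) q
      (treeHMeasure_eq_top μ.toMeasure hcmax hmax hmin hcmin hdist hq0' hnull hΞ)

end Multifractal
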